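/- Let X and Y be finite nonempty semimetric spaces. If X and Y are weakly similar, then there exists a bijective ball-preserving mapping f : X → Y. -/

import Mathlib

/-- A semimetric on `X`: nonnegative, symmetric, and vanishing exactly on the diagonal. -/
def IsSemimetric {X : Type*} (d : X → X → ℝ) : Prop :=
  (∀ x y, 0 ≤ d x y) ∧ (∀ x y, d x y = d y x) ∧ (∀ x y, d x y = 0 ↔ x = y)

/-- An ultrametric on `X`: a semimetric satisfying the strong triangle inequality. -/
def IsUltrametric {X : Type*} (d : X → X → ℝ) : Prop :=
  IsSemimetric d ∧ ∀ x y z, d x y ≤ max (d x z) (d z y)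

/-- The spectrum of a semimetric space: the set of values taken by the distance. -/
def spec {X : Type*} (d : X → X → ℝ) : Set ℝ := {r | ∃ x y, d x y = r}

/-- `B` is a ball of `(X,d)`: `B = {x | d x t ≤ r}` for some center `t` and radius `r ≥ 0`. -/
def IsBall {X : Type*} (d : X → X → ℝ) (B : Set X) : Prop :=
  ∃ (t : X) (r : ℝ), 0 ≤ r ∧ B = {x | d x t ≤ r}

/-- `F : X → Y` is ball-preserving: images of balls are balls and preimages of balls are balls. -/
def IsBallPreserving {X Y : Type*} (d : X → X → ℝ) (ρ : Y → Y → ℝ) (F : X → Y) : Prop :=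
  (∀ B : Set X, IsBall d B → IsBall ρ (F '' B)) ∧
  (∀ B : Set Y, IsBall ρ B → IsBall d (F ⁻¹' B))

/-- `Φ` is a weak similarity from `(X,d)` to `(Y,ρ)` with scaling function `f`:
`Φ` is a bijection and `f` is a strictly increasing bijection from `spec d` onto `spec ρ`
with `f (d x y) = ρ (Φ x) (Φ y)` for all `x y`. -/
def IsWeakSimilarity {X Y : Type*} (d : X → X → ℝ) (ρ : Y → Y → ℝ)
    (Φ : X → Y) (f : ℝ → ℝ) : Prop :=
  Function.Bijective Φ ∧ Set.BijOn f (spec d) (spec ρ) ∧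
  StrictMonoOn f (spec d) ∧ ∀ x y, f (d x y) = ρ (Φ x) (Φ y)

/-- `X` and `Y` are weakly similar: some weak similarity `Φ : X → Y` exists. -/
def WeaklySimilar {X Y : Type*} (d : X → X → ℝ) (ρ : Y → Y → ℝ) : Prop :=
  ∃ (Φ : X → Y) (f : ℝ → ℝ), IsWeakSimilarity d ρ Φ f

/-- `B₂` covers `B₁` in the ballean of `(X,d)` ordered by inclusion:
both are balls, `B₁ ⊊ B₂`, and no ball lies strictly between them.
These covering pairs are exactly the arcs of the Hasse diagram of the ballean. -/
def BallCovers {X : Type*} (d : X → X → ℝ) (B₁ B₂ : Set X) : Prop :=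
  IsBall d B₁ ∧ IsBall d B₂ ∧ B₁ ⊂ B₂ ∧
  ∀ B : Set X, IsBall d B → B₁ ⊆ B → B ⊆ B₂ → B = B₁ ∨ B = B₂

/-- The diameter of a subset `A` of a semimetric space `(X,d)`. -/
noncomputable def setDiam {X : Type*} (d : X → X → ℝ) (A : Set X) : ℝ :=
  sSup {r | ∃ x ∈ A, ∃ y ∈ A, d x y = r}

/-!
A weak similarity preserves and reflects the order of distances, so it carries a ball whose radius
is a distance from its center to a ball of the same kind. A ball of arbitrary radius `r` need not
go to a ball, because `r` may lie outside the domain of the scaling function; but if the ball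
contains a point farthest from its center, then its radius can be shrunk to an attained distance.
-/

/-- Every ball contains a point farthest from its center. This abstracts what
finiteness contributes, and also holds, for instance, in proper metric spaces. As the farthest point
`m` belongs to the ball, every ball is required to be nonempty. -/
def HasAttainedRadii {X : Type*} (d : X → X → ℝ) : Prop :=
  ∀ (t : X) (r : ℝ), 0 ≤ r → ∃ m, d m t ≤ r ∧ ∀ x, d x t ≤ r → d x t ≤ d m t

section

variable {X Y : Type*} {d : X → X → ℝ} {ρ : Y → Y → ℝ} {Φ : X → Y} {f : ℝ → ℝ}

theorem hasAttainedRadii_of_finite [Finite X] (hself : ∀ x, d x x = 0) : HasAttainedRadii d :=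
  fun t r hr =>
    Set.exists_max_image {x | d x t ≤ r} (d · t) (Set.toFinite _) ⟨t, (hself t).trans_le hr⟩

theorem HasAttainedRadii.isBall_iff (hd : HasAttainedRadii d) (hnonneg : ∀ x y, 0 ≤ d x y)
    {B : Set X} : IsBall d B ↔ ∃ t m, B = {x | d x t ≤ d m t} := by
  constructor
  · rintro ⟨t, r, hr, rfl⟩
    obtain ⟨m, hmr, hmax⟩ := hd t r hr
    exact ⟨t, m, Set.Subset.antisymm hmax fun _ hx => hx.trans hmr⟩
  · rintro ⟨t, m, rfl⟩
    exact ⟨t, d m t, hnonneg m t, rfl⟩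

namespace IsWeakSimilarity

theorem le_iff_le (h : IsWeakSimilarity d ρ Φ f) (x y z w : X) :
    ρ (Φ x) (Φ y) ≤ ρ (Φ z) (Φ w) ↔ d x y ≤ d z w := by
  obtain ⟨-, -, hmono, hf⟩ := h
  rw [← hf, ← hf]
  exact hmono.le_iff_le ⟨x, y, rfl⟩ ⟨z, w, rfl⟩

theorem preimage_setOf_dist_le (h : IsWeakSimilarity d ρ Φ f) (t m : X) :
    Φ ⁻¹' {y | ρ y (Φ t) ≤ ρ (Φ m) (Φ t)} = {x | d x t ≤ d m t} :=
  Set.ext fun x => h.le_iff_le x t m t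

theorem image_setOf_dist_le (h : IsWeakSimilarity d ρ Φ f) (t m : X) :
    Φ '' {x | d x t ≤ d m t} = {y | ρ y (Φ t) ≤ ρ (Φ m) (Φ t)} := by
  rw [← h.preimage_setOf_dist_le, Set.image_preimage_eq _ h.1.surjective]

theorem isBallPreserving (h : IsWeakSimilarity d ρ Φ f)
    (hd_nonneg : ∀ x y, 0 ≤ d x y) (hρ_nonneg : ∀ x y, 0 ≤ ρ x y)
    (hd : HasAttainedRadii d) (hρ : HasAttainedRadii ρ) : IsBallPreserving d ρ Φ := by
  simp only [IsBallPreserving, hd.isBall_iff hd_nonneg, hρ.isBall_iff hρ_nonneg]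
  constructor
  · rintro _ ⟨t, m, rfl⟩
    exact ⟨Φ t, Φ m, h.image_setOf_dist_le t m⟩
  · rintro _ ⟨t', m', rfl⟩
    obtain ⟨t, rfl⟩ := h.1.surjective t'
    obtain ⟨m, rfl⟩ := h.1.surjective m'
    exact ⟨t, m, h.preimage_setOf_dist_le t m⟩

end IsWeakSimilarity

end

theorem stmt10_general {X Y : Type*} (d : X → X → ℝ) (ρ : Y → Y → ℝ)
    (hd_nonneg : ∀ x y, 0 ≤ d x y) (hρ_nonneg : ∀ x y, 0 ≤ ρ x y)
    (hd : HasAttainedRadii d) (hρ : HasAttainedRadii ρ) (h : WeaklySimilar d ρ) :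
    ∃ g : X → Y, Function.Bijective g ∧ IsBallPreserving d ρ g := by
  obtain ⟨Φ, f, hΦ⟩ := h
  exact ⟨Φ, hΦ.1, hΦ.isBallPreserving hd_nonneg hρ_nonneg hd hρ⟩

/-- If finite nonempty semimetric spaces `X` and `Y` are weakly similar,
then there exists a bijective ball-preserving mapping `X → Y`. -/
theorem stmt10 {X Y : Type*} [Finite X] [Finite Y] [Nonempty X] [Nonempty Y]
    (d : X → X → ℝ) (ρ : Y → Y → ℝ) (hd : IsSemimetric d) (hρ : IsSemimetric ρ)
    (h : WeaklySimilar d ρ) :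
    ∃ g : X → Y, Function.Bijective g ∧ IsBallPreserving d ρ g := by
  exact stmt10_general d ρ hd.1 hρ.1 (hasAttainedRadii_of_finite fun x => (hd.2.2 x x).2 rfl)
    (hasAttainedRadii_of_finite fun y => (hρ.2.2 y y).2 rfl) h
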